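/- arXiv:1301.6419 — 6 statements merged into one kernel-verified Lean document; each statement's English description precedes it below -/
import Mathlib

section
/- Let G be a branch group acting on a rooted tree T and let K be a non-trivial normal subgroup of G. Then K contains the derived subgroup rist_G(n)' of rist_G(n) for some integer n ≥ 0. -/
/-!  Common definitions: rooted trees of type `(m n)`, tree automorphisms,
rigid stabilizers, branch groups, and auxiliary notions. -/

universe u

/-- Vertices of the rooted tree of type `m`: finite sequences `(x_0, …, x_{n-1})`
with `x_i ∈ {1, …, m i}` (encoded as `Fin (m i)`). -/
def Vertex (m : ℕ → ℕ) : Type := Σ n : ℕ, ∀ i : Fin n, Fin (m i)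

namespace Vertex

variable {m : ℕ → ℕ}

/-- The level of a vertex: its length. -/
def level (v : Vertex m) : ℕ := v.1

/-- `v` is a (weak) prefix of `w`; i.e. `w` lies in the subtree `T_v`
(`w = v` or `w` is a descendant of `v`). -/
def IsPrefix (v w : Vertex m) : Prop :=
  ∃ h : v.1 ≤ w.1, ∀ i : Fin v.1, w.2 (Fin.castLE h i) = v.2 i

/-- `w` is a child (one-step extension) of `v`. -/
def IsChild (v w : Vertex m) : Prop := w.1 = v.1 + 1 ∧ IsPrefix v w

end Vertex

/-- The `n`-th layer `L_n` of the tree: all vertices of level `n`. -/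
def layer (m : ℕ → ℕ) (n : ℕ) : Set (Vertex m) := {v | v.1 = n}

section Rist

variable {m : ℕ → ℕ} (G : Type*) [Group G] [MulAction G (Vertex m)]

/-- The rigid stabilizer of a vertex `v`: all elements fixing every vertex
outside the subtree `T_v`. -/
def rist (v : Vertex m) : Subgroup G :=
  ⨅ w ∈ {w : Vertex m | ¬ Vertex.IsPrefix v w}, MulAction.stabilizer G w

/-- The subgroup generated by the rigid stabilizers of the vertices in `X`. -/
def ristSet (X : Set (Vertex m)) : Subgroup G := ⨆ v ∈ X, rist G v

/-- `rist_G(n)`, the rigid stabilizer of the `n`-th layer. -/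
def ristLayer (m : ℕ → ℕ) (G : Type*) [Group G] [MulAction G (Vertex m)] (n : ℕ) :
    Subgroup G :=
  ristSet G (layer m n)

/-- The orbit of the vertex `v` under a subgroup `H ≤ G`. -/
def subOrbit (H : Subgroup G) (v : Vertex m) : Set (Vertex m) :=
  {w | ∃ h ∈ H, h • v = w}

/-- The set of orbits of a subgroup `H ≤ G` on a set `X` of vertices. -/
def orbitsOn (H : Subgroup G) (X : Set (Vertex m)) : Set (Set (Vertex m)) :=
  (fun v => subOrbit G H v) '' X

end Rist

/-- `G` is a branch group on the rooted tree of type `m` (with respect to the given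
action): the action is faithful and by tree automorphisms, `G` acts transitively on
each layer, and each `rist_G(n)` has finite index in `G`. -/
structure IsBranchGroup (m : ℕ → ℕ) (G : Type*) [Group G] [MulAction G (Vertex m)] :
    Prop where
  faithful : ∀ g : G, (∀ v : Vertex m, g • v = v) → g = 1
  aut : ∀ (g : G) (v w : Vertex m), Vertex.IsChild v w ↔ Vertex.IsChild (g • v) (g • w)
  trans : ∀ v w : Vertex m, v.1 = w.1 → ∃ g : G, g • v = w
  ristFiniteIndex : ∀ n : ℕ, (ristLayer m G n).FiniteIndex

/-- A group is virtually soluble if it has a soluble subgroup of finite index. -/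
def VirtuallySolvable (Γ : Type*) [Group Γ] : Prop :=
  ∃ S : Subgroup Γ, S.FiniteIndex ∧ IsSolvable ↥S

/-- A group is virtually abelian if it has an abelian subgroup of finite index. -/
def VirtuallyAbelian (Γ : Type*) [Group Γ] : Prop :=
  ∃ S : Subgroup Γ, S.FiniteIndex ∧ ∀ a ∈ S, ∀ b ∈ S, a * b = b * a

/-- For subgroups `A ≤ B` of a group with `A` normalised by `B`, this says that the
factor `B/A` belongs to the class `𝔛`. -/
def FactorIn (𝔛 : (Γ : Type u) → [inst : Group Γ] → Prop) {G : Type u} [Group G]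
    (A B : Subgroup G) : Prop :=
  ∃ hn : (A.subgroupOf B).Normal, letI := hn; 𝔛 (↥B ⧸ A.subgroupOf B)

/-- The factor `B/A` is virtually soluble. -/
def FactorVirtuallySolvable {G : Type*} [Group G] (A B : Subgroup G) : Prop :=
  ∃ hn : (A.subgroupOf B).Normal,
    letI := hn; VirtuallySolvable (↥B ⧸ A.subgroupOf B)

/-- The factor `B/A` is virtually abelian. -/
def FactorVirtuallyAbelian {G : Type*} [Group G] (A B : Subgroup G) : Prop :=
  ∃ hn : (A.subgroupOf B).Normal,
    letI := hn; VirtuallyAbelian (↥B ⧸ A.subgroupOf B)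

/-- `Γ` has `r` infinite normal subgroups that generate their direct product in `Γ`:
each of them intersects trivially the subgroup generated by the others. -/
def HasIndepFamily (Γ : Type*) [Group Γ] (r : ℕ) : Prop :=
  ∃ N : Fin r → Subgroup Γ, (∀ i, (N i).Normal) ∧ (∀ i, Infinite ↥(N i)) ∧
    ∀ i, N i ⊓ (⨆ j ∈ ({i}ᶜ : Set (Fin r)), N j) = ⊥

namespace RistAux

variable {m : ℕ → ℕ}

lemma prefix_eq {v w : Vertex m} (h : v.IsPrefix w) (e : v.1 = w.1) : v = w := by
  obtain ⟨n, v⟩ := v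
  obtain ⟨n', w⟩ := w
  obtain ⟨h1, h2⟩ := h
  dsimp only at e
  subst e
  congr 1
  funext i
  exact (h2 i).symm

lemma prefix_trans {u v w : Vertex m} (h : u.IsPrefix v) (h' : v.IsPrefix w) :
    u.IsPrefix w := by
  obtain ⟨a, ha⟩ := h
  obtain ⟨b, hb⟩ := h'
  exact ⟨a.trans b, fun i => (hb (Fin.castLE a i)).trans (ha i)⟩

lemma prefix_total {u v w : Vertex m} (h : u.IsPrefix w) (h' : v.IsPrefix w)
    (e : u.1 ≤ v.1) : u.IsPrefix v := by
  obtain ⟨a, ha⟩ := h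
  obtain ⟨b, hb⟩ := h'
  exact ⟨e, fun i => (hb (Fin.castLE e i)).symm.trans (ha i)⟩

lemma prefix_unique {u v w : Vertex m} (h : u.IsPrefix w) (h' : v.IsPrefix w)
    (e : u.1 = v.1) : u = v :=
  prefix_eq (prefix_total h h' e.le) e

lemma exists_parent (w : Vertex m) (n : ℕ) (h : w.1 = n + 1) : ∃ u : Vertex m, u.IsChild w := by
  obtain ⟨k, w⟩ := w
  dsimp only at h
  subst h
  exact ⟨⟨n, fun i => w (Fin.castLE (Nat.le_succ n) i)⟩, rfl, Nat.le_succ n, fun i => rfl⟩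

variable {G : Type*} [Group G] [MulAction G (Vertex m)]

lemma level_smul (hG : IsBranchGroup m G) (g : G) :
    ∀ (n : ℕ) (v : Vertex m), v.1 = n → (g • v).1 = n := by
  intro n
  induction n with
  | zero =>
    intro v hv
    by_contra hne
    obtain ⟨k, hk⟩ := Nat.exists_eq_succ_of_ne_zero hne
    obtain ⟨u, hu⟩ := exists_parent _ k hk
    have := (hG.aut g⁻¹ _ _).1 hu
    rw [inv_smul_smul] at this
    have := this.1
    omega
  | succ n ih =>
    intro v hv
    obtain ⟨u, hu⟩ := exists_parent v n hv
    have h1 := ((hG.aut g _ _).1 hu).1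
    have h2 := hu.1
    have := ih u (by omega)
    omega

lemma prefix_smul (hG : IsBranchGroup m G) (g : G) (v : Vertex m) :
    ∀ (d : ℕ) (w : Vertex m), w.1 = v.1 + d → v.IsPrefix w → (g • v).IsPrefix (g • w) := by
  intro d
  induction d with
  | zero =>
    intro w hw h
    rw [prefix_eq h hw.symm]
    exact ⟨le_rfl, fun i => rfl⟩
  | succ d ih =>
    intro w hw h
    obtain ⟨u, hu⟩ := exists_parent w (v.1 + d) hw
    have h2 := hu.1
    exact prefix_trans (ih u (by omega) (prefix_total h hu.2 (by omega)))
      ((hG.aut g _ _).1 hu).2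

lemma prefix_smul_of (hG : IsBranchGroup m G) (g : G) {v w : Vertex m} (h : v.IsPrefix w) :
    (g • v).IsPrefix (g • w) :=
  prefix_smul hG g v (w.1 - v.1) w (by have := h.1; omega) h

lemma mem_rist {v : Vertex m} {a : G} :
    a ∈ rist G v ↔ ∀ w : Vertex m, ¬ v.IsPrefix w → a • w = w := by
  simp [rist, Subgroup.mem_iInf]

lemma rist_fix (hG : IsBranchGroup m G) {v : Vertex m} {a : G} (ha : a ∈ rist G v) :
    a • v = v := by
  by_contra hne
  have hp : ¬ v.IsPrefix (a • v) := fun h =>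
    hne (prefix_eq h (level_smul hG a _ v rfl).symm).symm
  exact hne (MulAction.injective a (mem_rist.1 ha _ hp))

lemma rist_prefix (hG : IsBranchGroup m G) {v w : Vertex m} {a : G} (ha : a ∈ rist G v)
    (h : v.IsPrefix w) : v.IsPrefix (a • w) := by
  have := prefix_smul_of hG a h
  rwa [rist_fix hG ha] at this

lemma rist_comm (hG : IsBranchGroup m G) {u v : Vertex m} (e : u.1 = v.1) (hne : u ≠ v)
    {a b : G} (ha : a ∈ rist G u) (hb : b ∈ rist G v) : a * b = b * a := by
  have key : ∀ w : Vertex m, (a * b) • w = (b * a) • w := by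
    intro w
    rw [mul_smul, mul_smul]
    by_cases hu : u.IsPrefix w
    · have h1 : ¬ v.IsPrefix w := fun h => hne (prefix_unique hu h e)
      have h2 : ¬ v.IsPrefix (a • w) := fun h =>
        hne (prefix_unique (rist_prefix hG ha hu) h e)
      rw [mem_rist.1 hb _ h1, mem_rist.1 hb _ h2]
    · rw [mem_rist.1 ha _ hu]
      by_cases hv : v.IsPrefix w
      · have h2 : ¬ u.IsPrefix (b • w) := fun h =>
          hne (prefix_unique h (rist_prefix hG hb hv) e)
        rw [mem_rist.1 ha _ h2]
      · rw [mem_rist.1 hb _ hv, mem_rist.1 ha _ hu]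
  have := hG.faithful ((b * a)⁻¹ * (a * b)) (fun w => by
    rw [mul_smul, key, inv_smul_smul])
  exact (inv_mul_eq_one.1 this).symm

lemma rist_conj (hG : IsBranchGroup m G) {v : Vertex m} {a : G} (g : G) (ha : a ∈ rist G v) :
    g * a * g⁻¹ ∈ rist G (g • v) := by
  rw [mem_rist]
  intro w hw
  have : ¬ v.IsPrefix (g⁻¹ • w) := fun h => hw (by
    have := prefix_smul_of hG g h
    rwa [smul_inv_smul] at this)
  rw [mul_smul, mul_smul, mem_rist.1 ha _ this, smul_inv_smul]

lemma base (hG : IsBranchGroup m G) (K : Subgroup G) [hn : K.Normal] {k : G} (hk : k ∈ K)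
    {v : Vertex m} (hv : k • v ≠ v) {a b : G} (ha : a ∈ rist G v) (hb : b ∈ rist G v) :
    a * b * a⁻¹ * b⁻¹ ∈ K := by
  have hc := rist_conj hG k (inv_mem ha)
  have e := level_smul hG k _ v rfl
  have h1 := rist_comm hG e hv hc hb
  have hx : a * (k * a⁻¹ * k⁻¹) ∈ K := by
    have := mul_mem (hn.conj_mem k hk a) (inv_mem hk)
    simpa [mul_assoc] using this
  generalize k * a⁻¹ * k⁻¹ = c at *
  have h3 : c * b * c⁻¹ = b := by rw [h1]; group
  have := mul_mem hx (hn.conj_mem _ (inv_mem hx) b)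
  have e2 : a * c * (b * (a * c)⁻¹ * b⁻¹) = a * (c * b * c⁻¹) * a⁻¹ * b⁻¹ := by group
  rwa [e2, h3] at this

end RistAux

/-- **Theorem (Grigorchuk).** If `G` is a branch group acting on a rooted tree `T` and
`K` is a non-trivial normal subgroup of `G`, then `K` contains the derived subgroup
`rist_G(n)'` for some `n ≥ 0`. -/
theorem normal_subgroup_contains_rist_derived
    (m : ℕ → ℕ) (hm : ∀ n, 2 ≤ m n)
    (G : Type*) [Group G] [MulAction G (Vertex m)] (hG : IsBranchGroup m G)
    (K : Subgroup G) [K.Normal] (hK : K ≠ ⊥) :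
    ∃ n : ℕ, ⁅ristLayer m G n, ristLayer m G n⁆ ≤ K := by
  classical
  obtain ⟨⟨k, hk⟩, hk0⟩ := Subgroup.ne_bot_iff_exists_ne_one.1 hK
  have hk1 : k ≠ 1 := fun h => hk0 (Subtype.ext h)
  have hmv : ∃ v : Vertex m, k • v ≠ v := by
    by_contra! h
    exact hk1 (hG.faithful k h)
  obtain ⟨v, hv⟩ := hmv
  have hn : K.Normal := inferInstance
  have gen : ∀ u ∈ layer m v.1, ∀ w ∈ layer m v.1, ∀ a ∈ rist G u, ∀ b ∈ rist G w,
      a * b * a⁻¹ * b⁻¹ ∈ K := by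
    intro u hu w hw a ha b hb
    by_cases huw : u = w
    · subst huw
      obtain ⟨g, rfl⟩ := hG.trans v u hu.symm
      refine RistAux.base hG K (hn.conj_mem k hk g) (v := g • v) ?_ ha hb
      intro h
      rw [mul_smul, inv_smul_smul, mul_smul] at h
      exact hv (MulAction.injective g h)
    · have := RistAux.rist_comm hG (hu.trans hw.symm) huw ha hb
      rw [this]
      simp
  refine ⟨v.1, ?_⟩
  have hle : ∀ w ∈ layer m v.1, ∀ b ∈ rist G w, ∀ a ∈ ristLayer m G v.1,
      a * b * a⁻¹ * b⁻¹ ∈ K := by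
    intro w hw b hb
    have : ristLayer m G v.1 ≤
        (Subgroup.centralizer {QuotientGroup.mk' K b}).comap (QuotientGroup.mk' K) := by
      refine iSup₂_le fun u hu a ha => ?_
      rw [Subgroup.mem_comap, Subgroup.mem_centralizer_singleton_iff]
      have := (QuotientGroup.eq_one_iff _).2 (gen u hu w hw a ha b hb)
      change QuotientGroup.mk' K _ = 1 at this
      simp only [map_mul, map_inv] at this
      rw [mul_inv_eq_one, mul_inv_eq_iff_eq_mul] at this
      first | exact this | exact this.symm
    intro a ha
    have := this ha
    rw [Subgroup.mem_comap, Subgroup.mem_centralizer_singleton_iff] at this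
    refine (QuotientGroup.eq_one_iff _).1 ?_
    change QuotientGroup.mk' K _ = 1
    simp only [map_mul, map_inv]
    rw [mul_inv_eq_one, mul_inv_eq_iff_eq_mul]
    first | exact this | exact this.symm
  rw [Subgroup.commutator_le]
  intro a ha
  have : ristLayer m G v.1 ≤
      (Subgroup.centralizer {QuotientGroup.mk' K a}).comap (QuotientGroup.mk' K) := by
    refine iSup₂_le fun u hu b hb => ?_
    rw [Subgroup.mem_comap, Subgroup.mem_centralizer_singleton_iff]
    have := (QuotientGroup.eq_one_iff _).2 (hle u hu b hb a ha)
    change QuotientGroup.mk' K _ = 1 at this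
    simp only [map_mul, map_inv] at this
    rw [mul_inv_eq_one, mul_inv_eq_iff_eq_mul] at this
    first | exact this | exact this.symm
  intro b hb
  have := this hb
  rw [Subgroup.mem_comap, Subgroup.mem_centralizer_singleton_iff] at this
  refine (QuotientGroup.eq_one_iff _).1 ?_
  change QuotientGroup.mk' K (a * b * a⁻¹ * b⁻¹) = 1
  simp only [map_mul, map_inv]
  rw [mul_inv_eq_one, mul_inv_eq_iff_eq_mul]
  first | exact this | exact this.symm
end

section
/- Let G be a branch group acting on a rooted tree T and let K be a non-trivial normal subgroup of G. Then the quotient group G/K is virtually abelian, i.e. G/K has an abelian subgroup of finite index. -/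
/-!  Common definitions: rooted trees of type `(m n)`, tree automorphisms,
rigid stabilizers, branch groups, and auxiliary notions. -/

universe u

namespace Vertex

variable {m : ℕ → ℕ}

theorem IsPrefix.trans {u v w : Vertex m} (h : IsPrefix u v) (h' : IsPrefix v w) :
    IsPrefix u w := by
  obtain ⟨h1, h2⟩ := h
  obtain ⟨h3, h4⟩ := h'
  refine ⟨h1.trans h3, fun i => ?_⟩
  rw [← h2 i, ← h4 (Fin.castLE h1 i)]
  rfl

theorem isPrefix_refl (u : Vertex m) : IsPrefix u u := ⟨le_rfl, fun _ => rfl⟩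

theorem IsPrefix.eq {u w : Vertex m} (h : IsPrefix u w) (hl : w.1 = u.1) : u = w := by
  obtain ⟨n, u⟩ := u
  obtain ⟨k, w⟩ := w
  dsimp only at hl
  subst hl
  obtain ⟨h1, h2⟩ := h
  have : u = w := funext fun i => (h2 i).symm
  rw [this]

theorem eq_of_common {u v w : Vertex m} (hl : u.1 = v.1) (h : IsPrefix u w)
    (h' : IsPrefix v w) : u = v := by
  obtain ⟨n, u⟩ := u
  obtain ⟨k, v⟩ := v
  dsimp only at hl
  subst hl
  obtain ⟨h1, h2⟩ := h
  obtain ⟨h3, h4⟩ := h'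
  have : u = v := funext fun i => (h2 i).symm.trans (h4 i)
  rw [this]

theorem exists_parent (v y : Vertex m) (h : IsPrefix v y) (d : ℕ) (hd : y.1 = v.1 + d + 1) :
    ∃ p : Vertex m, p.1 = v.1 + d ∧ IsChild p y ∧ IsPrefix v p := by
  have hle : v.1 + d ≤ y.1 := by omega
  obtain ⟨h1, h2⟩ := h
  refine ⟨⟨v.1 + d, fun i => y.2 (Fin.castLE hle i)⟩, rfl, ⟨hd, hle, fun i => rfl⟩,
    ⟨Nat.le_add_right _ _, fun i => ?_⟩⟩
  rw [← h2 i]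
  rfl

theorem root_prefix (y : Vertex m) : IsPrefix (⟨0, fun i => i.elim0⟩ : Vertex m) y :=
  ⟨Nat.zero_le _, fun i => i.elim0⟩

end Vertex

section Aux

variable {m : ℕ → ℕ} {G : Type*} [Group G] [MulAction G (Vertex m)]

theorem smul_level (hG : IsBranchGroup m G) (g : G) :
    ∀ (n : ℕ) (v : Vertex m), v.1 = n → (g • v).1 = n := by
  intro n
  induction n with
  | zero =>
    intro v hv
    by_contra hne
    obtain ⟨d, hd⟩ := Nat.exists_eq_succ_of_ne_zero hne
    obtain ⟨p, -, hp, -⟩ := Vertex.exists_parent _ (g • v) (Vertex.root_prefix _) d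
      (by rw [hd]; simp)
    have := (hG.aut g (g⁻¹ • p) v).2 (by rwa [smul_inv_smul])
    have := this.1
    omega
  | succ n ih =>
    intro v hv
    obtain ⟨p, hpl, hp, -⟩ := Vertex.exists_parent _ v (Vertex.root_prefix _) n
      (by rw [hv]; simp)
    have h1 := ((hG.aut g p v).1 hp).1
    rw [h1, ih p (by simpa using hpl)]

theorem smul_prefix (hG : IsBranchGroup m G) (g : G) (v : Vertex m) :
    ∀ (d : ℕ) (y : Vertex m), y.1 = v.1 + d → Vertex.IsPrefix v y →
      Vertex.IsPrefix (g • v) (g • y) := by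
  intro d
  induction d with
  | zero =>
    intro y hy h
    rw [h.eq (by simpa using hy)]
    exact Vertex.isPrefix_refl _
  | succ d ih =>
    intro y hy h
    obtain ⟨p, hpl, hp, hvp⟩ := Vertex.exists_parent v y h d (by omega)
    exact (ih p hpl hvp).trans ((hG.aut g p y).1 hp).2

theorem mem_rist {v : Vertex m} {a : G} :
    a ∈ rist G v ↔ ∀ w, ¬ Vertex.IsPrefix v w → a • w = w := by
  simp [rist, Subgroup.mem_iInf, MulAction.mem_stabilizer_iff]

theorem rist_conj (hG : IsBranchGroup m G) (g : G) {v : Vertex m} {a : G} (ha : a ∈ rist G v) :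
    g * a * g⁻¹ ∈ rist G (g • v) := by
  rw [mem_rist] at ha ⊢
  intro w hw
  have : a • (g⁻¹ • w) = g⁻¹ • w := by
    apply ha
    intro h
    apply hw
    have h2 : (g⁻¹ • w).1 = v.1 + ((g⁻¹ • w).1 - v.1) := by
      have := h.1
      omega
    have h3 := smul_prefix hG g v _ _ h2 h
    rwa [smul_inv_smul] at h3
  rw [mul_smul, mul_smul, this, smul_inv_smul]

theorem rist_stays {v w : Vertex m} {a : G} (ha : a ∈ rist G v) (h : Vertex.IsPrefix v w) :
    Vertex.IsPrefix v (a • w) := by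
  by_contra hn
  have h1 := mem_rist.1 ha _ hn
  have h2 : a • w = w := MulAction.injective a h1
  rw [h2] at hn
  exact hn h

theorem rist_comm (hG : IsBranchGroup m G) {u v : Vertex m} (hl : u.1 = v.1) (hne : u ≠ v)
    {a b : G} (ha : a ∈ rist G u) (hb : b ∈ rist G v) : a * b = b * a := by
  have key : ∀ x : Vertex m, (a * b) • x = (b * a) • x := by
    intro x
    rw [mul_smul, mul_smul]
    by_cases hx : Vertex.IsPrefix u x
    · have h1 : ∀ y, Vertex.IsPrefix u y → b • y = y := fun y hy =>
        mem_rist.1 hb y fun h => hne (Vertex.eq_of_common hl hy h)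
      rw [h1 x hx, h1 _ (rist_stays ha hx)]
    · rw [mem_rist.1 ha x hx]
      apply mem_rist.1 ha
      by_cases hv : Vertex.IsPrefix v x
      · exact fun h => hne (Vertex.eq_of_common hl h (rist_stays hb hv))
      · rwa [mem_rist.1 hb x hv]
  have := hG.faithful ((b * a)⁻¹ * (a * b)) fun x => by
    rw [mul_smul, key, inv_smul_smul]
  exact (inv_mul_eq_one.1 this).symm

end Aux

/-- **Theorem.** If `G` is a branch group acting on a rooted tree `T` and `K` is a
non-trivial normal subgroup of `G`, then the quotient `G/K` is virtually abelian. -/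
theorem quotient_by_normal_virtually_abelian
    (m : ℕ → ℕ) (hm : ∀ n, 2 ≤ m n)
    (G : Type*) [Group G] [MulAction G (Vertex m)] (hG : IsBranchGroup m G)
    (K : Subgroup G) [K.Normal] (hK : K ≠ ⊥) :
    ∃ A : Subgroup (G ⧸ K), A.FiniteIndex ∧ ∀ a ∈ A, ∀ b ∈ A, a * b = b * a := by
  obtain ⟨g, hgK, hg1⟩ := (Subgroup.ne_bot_iff_exists_ne_one.1 hK : ∃ a : K, a ≠ 1) |>.elim
    fun a ha => (⟨a.1, a.2, fun h => ha (Subtype.ext h)⟩ : ∃ g : G, g ∈ K ∧ g ≠ 1)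
  obtain ⟨v, hv⟩ : ∃ v : Vertex m, g • v ≠ v := by
    by_contra! h
    exact hg1 (hG.faithful g h)
  have hlev : ∀ (g : G) (v : Vertex m), (g • v).1 = v.1 := fun g v => smul_level hG g _ v rfl
  have hcv : ∀ a ∈ rist G v, ∀ b ∈ rist G v,
      (QuotientGroup.mk' K a) * (QuotientGroup.mk' K b) =
        (QuotientGroup.mk' K b) * (QuotientGroup.mk' K a) := by
    intro a ha b hb
    have hc : g * a * g⁻¹ ∈ rist G (g • v) := rist_conj hG g ha
    have hcb := rist_comm hG (hlev g v) hv hc hb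
    have hg : QuotientGroup.mk' K g = 1 := (QuotientGroup.eq_one_iff g).2 hgK
    have := congrArg (QuotientGroup.mk' K) hcb
    simpa only [map_mul, map_inv, hg, one_mul, inv_one, mul_one] using this
  have hcw : ∀ w ∈ layer m v.1, ∀ a ∈ rist G w, ∀ b ∈ rist G w,
      (QuotientGroup.mk' K a) * (QuotientGroup.mk' K b) =
        (QuotientGroup.mk' K b) * (QuotientGroup.mk' K a) := by
    intro w hw a ha b hb
    obtain ⟨h, rfl⟩ := hG.trans v w (Eq.symm hw)
    have ha' := rist_conj hG h⁻¹ ha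
    have hb' := rist_conj hG h⁻¹ hb
    rw [inv_smul_smul] at ha' hb'
    have := hcv _ ha' _ hb'
    simp only [map_mul, map_inv] at this
    simp only [inv_inv, mul_assoc, mul_inv_cancel_left, mul_right_inj] at this
    simpa only [← mul_assoc, mul_left_inj] using this
  have hall : ∀ u ∈ layer m v.1, ∀ w ∈ layer m v.1, ∀ a ∈ rist G u, ∀ b ∈ rist G w,
      (QuotientGroup.mk' K a) * (QuotientGroup.mk' K b) =
        (QuotientGroup.mk' K b) * (QuotientGroup.mk' K a) := by
    intro u hu w hw a ha b hb
    by_cases huw : u = w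
    · subst huw
      exact hcw u hu a ha b hb
    · rw [← map_mul, rist_comm hG (Eq.trans hu (Eq.symm hw)) huw ha hb, map_mul]
  have hle : ∀ c : G ⧸ K, (∀ u ∈ layer m v.1, ∀ a ∈ rist G u,
      (QuotientGroup.mk' K a) * c = c * (QuotientGroup.mk' K a)) →
      ∀ a ∈ ristLayer m G v.1, (QuotientGroup.mk' K a) * c = c * (QuotientGroup.mk' K a) := by
    intro c hc a ha
    have h1 : ristLayer m G v.1 ≤
        (Subgroup.centralizer {c}).comap (QuotientGroup.mk' K) := by
      refine iSup₂_le fun u hu a ha => ?_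
      rw [Subgroup.mem_comap, Subgroup.mem_centralizer_singleton_iff]
      exact hc u hu a ha
    have h2 := h1 ha
    rwa [Subgroup.mem_comap, Subgroup.mem_centralizer_singleton_iff] at h2
  haveI := hG.ristFiniteIndex v.1
  refine ⟨(ristLayer m G v.1).map (QuotientGroup.mk' K), ?_, ?_⟩
  · refine ⟨fun h0 => this.index_ne_zero ?_⟩
    have := Subgroup.index_map_dvd (ristLayer m G v.1) (QuotientGroup.mk'_surjective K)
    rw [h0] at this
    exact Nat.eq_zero_of_zero_dvd this
  · rintro _ ⟨a, ha, rfl⟩ _ ⟨b, hb, rfl⟩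
    refine hle _ (fun u hu a' ha' => ?_) a ha
    exact (hle _ (fun w hw b' hb' => hall w hw u hu b' hb' a' ha') b hb).symm
end

section
/- Let G be a branch group acting on a rooted tree T and let H be a subgroup of finite index in G. Then for every n the number of H-orbits on the layer L_n is at most the index |G:H|; if X is an H-orbit in L_n then the set of descendants of X in L_{n+1} is a union of H-orbits; and there exists n_0 such that for all n ≥ n_0 the number of H-orbits on L_n equals the number of H-orbits on L_{n_0}. -/
/-!  Common definitions: rooted trees of type `(m n)`, tree automorphisms,
rigid stabilizers, branch groups, and auxiliary notions. -/

universe u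

theorem exists_parent_aux {m : ℕ → ℕ} (w : Vertex m) (n : ℕ) (h : w.1 = n + 1) :
    ∃ v : Vertex m, v.1 = n ∧ Vertex.IsChild v w := by
  obtain ⟨k, f⟩ := w
  simp only at h
  subst h
  exact ⟨⟨n, fun i => f (Fin.castLE (Nat.le_succ n) i)⟩, rfl, rfl, Nat.le_succ n, fun i => rfl⟩

theorem exists_child_aux {m : ℕ → ℕ} (hm : ∀ n, 2 ≤ m n) (v : Vertex m) :
    ∃ w : Vertex m, Vertex.IsChild v w := by
  obtain ⟨k, f⟩ := v
  refine ⟨⟨k + 1, fun i => if h : i.1 < k then f ⟨i.1, h⟩ else ⟨0, by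
    have := hm i.1; omega⟩⟩, rfl, Nat.le_succ k, fun i => ?_⟩
  simp

theorem parent_unique_aux {m : ℕ → ℕ} {u v w : Vertex m} (hu : Vertex.IsChild u w)
    (hv : Vertex.IsChild v w) : u = v := by
  obtain ⟨h1, h2, h3⟩ := hu
  obtain ⟨k1, k2, k3⟩ := hv
  obtain ⟨a, f⟩ := u
  obtain ⟨b, g⟩ := v
  simp only at *
  have : a = b := by omega
  subst this
  congr 1
  funext i
  rw [← h3 i, ← k3 i]

theorem level_smul_aux {m : ℕ → ℕ} {G : Type*} [Group G] [MulAction G (Vertex m)]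
    (hG : IsBranchGroup m G) (g : G) (n : ℕ) : ∀ v : Vertex m, v.1 = n → (g • v).1 = n := by
  induction n with
  | zero =>
    intro v hv
    by_contra hne
    obtain ⟨k, hk⟩ := Nat.exists_eq_succ_of_ne_zero hne
    obtain ⟨p, -, hp⟩ := exists_parent_aux (g • v) k hk
    rw [hG.aut g⁻¹, inv_smul_smul] at hp
    have := hp.1
    omega
  | succ n ih =>
    intro v hv
    obtain ⟨p, hp0, hp⟩ := exists_parent_aux v n hv
    have h1 := ((hG.aut g _ _).1 hp).1
    rw [h1, ih p hp0]

theorem subOrbit_smul_aux {m : ℕ → ℕ} {G : Type*} [Group G] [MulAction G (Vertex m)]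
    (H : Subgroup G) (h : G) (hh : h ∈ H) (v : Vertex m) :
    subOrbit G H (h • v) = subOrbit G H v := by
  ext w
  constructor
  · rintro ⟨k, hk, rfl⟩
    exact ⟨k * h, H.mul_mem hk hh, mul_smul _ _ _⟩
  · rintro ⟨k, hk, rfl⟩
    exact ⟨k * h⁻¹, H.mul_mem hk (H.inv_mem hh), by rw [mul_smul, inv_smul_smul]⟩

theorem orbits_bound_aux {m : ℕ → ℕ} (hm : ∀ n, 2 ≤ m n) {G : Type*} [Group G]
    [MulAction G (Vertex m)] (hG : IsBranchGroup m G) (H : Subgroup G) [H.FiniteIndex] (n : ℕ) :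
    (orbitsOn G H (layer m n)).Finite ∧
        Nat.card (orbitsOn G H (layer m n)) ≤ H.index := by
  let v0 : Vertex m := ⟨n, fun i => ⟨0, by have := hm i; omega⟩⟩
  let φ : G ⧸ H → Set (Vertex m) := Quotient.lift (fun g : G => subOrbit G H (g⁻¹ • v0)) (by
    intro a b hab
    have hab' : a⁻¹ * b ∈ H := QuotientGroup.leftRel_apply.1 hab
    have := subOrbit_smul_aux H (a⁻¹ * b) hab' (b⁻¹ • v0)
    rw [smul_smul, mul_assoc, mul_inv_cancel, mul_one] at this
    exact this)
  have hsub : orbitsOn G H (layer m n) ⊆ Set.range φ := by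
    rintro _ ⟨v, hv, rfl⟩
    obtain ⟨g, hg⟩ := hG.trans v0 v hv.symm
    refine ⟨((g⁻¹ : G) : G ⧸ H), ?_⟩
    change subOrbit G H (g⁻¹⁻¹ • v0) = _
    rw [inv_inv, hg]
  have hfin : (Set.range φ).Finite := Set.finite_range φ
  refine ⟨hfin.subset hsub, ?_⟩
  calc Nat.card (orbitsOn G H (layer m n)) ≤ Nat.card (Set.range φ) := Nat.card_mono hfin hsub
    _ ≤ Nat.card (G ⧸ H) := Finite.card_range_le φ
    _ = H.index := rfl

theorem orbits_mono_aux {m : ℕ → ℕ} (hm : ∀ n, 2 ≤ m n) {G : Type*} [Group G]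
    [MulAction G (Vertex m)] (hG : IsBranchGroup m G) (H : Subgroup G) [H.FiniteIndex] (n : ℕ) :
    Nat.card (orbitsOn G H (layer m n)) ≤ Nat.card (orbitsOn G H (layer m (n + 1))) := by
  let F : Set (Vertex m) → Set (Vertex m) := fun Y => {v | ∃ w ∈ Y, Vertex.IsChild v w}
  have hfin := (orbits_bound_aux hm hG H (n + 1)).1
  have hsub : orbitsOn G H (layer m n) ⊆ F '' orbitsOn G H (layer m (n + 1)) := by
    rintro _ ⟨v, hv, rfl⟩
    obtain ⟨w, hw⟩ := exists_child_aux hm v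
    have hv' : v.1 = n := hv
    refine ⟨_, ⟨w, show w.1 = n + 1 by rw [hw.1, hv'], rfl⟩, ?_⟩
    ext u
    constructor
    · rintro ⟨_, ⟨h, hh, rfl⟩, hu⟩
      exact ⟨h, hh, parent_unique_aux ((hG.aut h _ _).1 hw) hu⟩
    · rintro ⟨h, hh, rfl⟩
      exact ⟨_, ⟨h, hh, rfl⟩, (hG.aut h _ _).1 hw⟩
  exact (Nat.card_mono (hfin.image F) hsub).trans (Nat.card_image_le hfin)

/-- **Remark (bounded orbits).** Let `G` be a branch group on `T` and `H ≤ G` of finite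
index.  Then `H` has at most `|G : H|` orbits on each layer `L_n`; the set of
descendants in `L_{n+1}` of an `H`-orbit `X ⊆ L_n` is a union of `H`-orbits; and there
is `n₀` such that for all `n ≥ n₀` the number of `H`-orbits on `L_n` equals the number
of `H`-orbits on `L_{n₀}`. -/
theorem bounded_orbits
    (m : ℕ → ℕ) (hm : ∀ n, 2 ≤ m n)
    (G : Type*) [Group G] [MulAction G (Vertex m)] (hG : IsBranchGroup m G)
    (H : Subgroup G) [H.FiniteIndex] :
    (∀ n : ℕ, (orbitsOn G H (layer m n)).Finite ∧
        Nat.card (orbitsOn G H (layer m n)) ≤ H.index) ∧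
    (∀ (n : ℕ) (X : Set (Vertex m)), (∃ v ∈ layer m n, X = subOrbit G H v) →
        ∀ h ∈ H, ∀ w ∈ {w ∈ layer m (n + 1) | ∃ v ∈ X, Vertex.IsPrefix v w},
          h • w ∈ {w ∈ layer m (n + 1) | ∃ v ∈ X, Vertex.IsPrefix v w}) ∧
    (∃ n₀ : ℕ, ∀ n ≥ n₀,
        Nat.card (orbitsOn G H (layer m n)) = Nat.card (orbitsOn G H (layer m n₀))) := by
  refine ⟨orbits_bound_aux hm hG H, ?_, ?_⟩
  · rintro n _ ⟨v, hv, rfl⟩ h hh w ⟨hw, _, ⟨k, hk, rfl⟩, hp⟩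
    have hc : Vertex.IsChild (k • v) w := by
      refine ⟨?_, hp⟩
      rw [level_smul_aux hG k n v hv]
      exact hw
    refine ⟨level_smul_aux hG h (n + 1) w hw, h • k • v, ⟨h * k, H.mul_mem hh hk, mul_smul _ _ _⟩,
      ((hG.aut h _ _).1 hc).2⟩
  · have hmono : Monotone (fun n => Nat.card (orbitsOn G H (layer m n))) :=
      monotone_nat_of_le_succ (orbits_mono_aux hm hG H)
    have hfin : (Set.range (fun n => Nat.card (orbitsOn G H (layer m n)))).Finite := by
      refine (Set.finite_Iic H.index).subset ?_
      rintro _ ⟨n, rfl⟩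
      exact (orbits_bound_aux hm hG H n).2
    obtain ⟨_, ⟨n0, rfl⟩, hmax⟩ := Set.exists_max_image _ id hfin (Set.range_nonempty _)
    exact ⟨n0, fun n hn => le_antisymm (hmax _ ⟨n, rfl⟩) (hmono hn)⟩
end

section
/- Let G be a branch group acting on a rooted tree T. Then G has no non-trivial abelian subgroup K satisfying K ⊴ K^G ⊴ G, where K^G denotes the subgroup of G generated by all G-conjugates of K. In particular, G has no non-trivial abelian normal subgroup. -/
/-!  Common definitions: rooted trees of type `(m n)`, tree automorphisms,
rigid stabilizers, branch groups, and auxiliary notions. -/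

universe u

namespace BranchAux

variable {m : ℕ → ℕ} {G : Type*} [Group G] [MulAction G (Vertex m)]

lemma pre_refl (v : Vertex m) : Vertex.IsPrefix v v := ⟨le_rfl, fun _ => rfl⟩

lemma pre_trans {u v w : Vertex m} (h : Vertex.IsPrefix u v) (h' : Vertex.IsPrefix v w) :
    Vertex.IsPrefix u w := by
  obtain ⟨h1, h2⟩ := h
  obtain ⟨h3, h4⟩ := h'
  refine ⟨h1.trans h3, fun i => ?_⟩
  rw [← h2 i, ← h4 (Fin.castLE h1 i)]
  rfl

lemma pre_eq {u v w : Vertex m} (h : Vertex.IsPrefix u w) (h' : Vertex.IsPrefix v w)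
    (e : u.1 = v.1) : u = v := by
  obtain ⟨n, u⟩ := u
  obtain ⟨n', v⟩ := v
  obtain rfl : n = n' := e
  obtain ⟨h1, h2⟩ := h
  obtain ⟨h3, h4⟩ := h'
  congr 1
  funext i
  exact (h2 i).symm.trans (h4 i)

lemma exists_parent (v w : Vertex m) (h : Vertex.IsPrefix v w) (hl : v.1 < w.1) :
    ∃ p : Vertex m, Vertex.IsPrefix v p ∧ Vertex.IsChild p w := by
  obtain ⟨n, w⟩ := w
  obtain ⟨h1, h2⟩ := h
  cases n with
  | zero => exact absurd hl (Nat.not_lt_zero _)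
  | succ n =>
    refine ⟨⟨n, fun i => w (Fin.castLE (Nat.le_succ n) i)⟩, ⟨Nat.lt_succ_iff.mp hl, fun i => ?_⟩,
      rfl, Nat.le_succ n, fun i => rfl⟩
    exact h2 i

def root (m : ℕ → ℕ) : Vertex m := ⟨0, fun i => i.elim0⟩

lemma root_pre (v : Vertex m) : Vertex.IsPrefix (root m) v :=
  ⟨Nat.zero_le _, fun i => i.elim0⟩

variable (hG : IsBranchGroup m G)
include hG

lemma level_smul (g : G) (v : Vertex m) : (g • v).1 = v.1 := by
  suffices H : ∀ n, ∀ v : Vertex m, v.1 = n → (g • v).1 = n from H _ v rfl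
  intro n
  induction n with
  | zero =>
    intro v hv
    by_contra hne
    obtain ⟨p, -, hp⟩ := exists_parent (root m) (g • v) (root_pre _) (Nat.pos_of_ne_zero hne)
    rw [hG.aut g⁻¹, inv_smul_smul] at hp
    have := hp.1
    omega
  | succ n ih =>
    intro v hv
    obtain ⟨p, -, hp⟩ := exists_parent (root m) v (root_pre _) (by rw [hv]; exact Nat.succ_pos n)
    have h1 := ih p (by have := hp.1; omega)
    have h2 := ((hG.aut g _ _).1 hp).1
    omega

lemma pre_smul (g : G) {v w : Vertex m} (h : Vertex.IsPrefix v w) :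
    Vertex.IsPrefix (g • v) (g • w) := by
  suffices H : ∀ n, ∀ w : Vertex m, w.1 = n → Vertex.IsPrefix v w →
      Vertex.IsPrefix (g • v) (g • w) from H _ w rfl h
  clear h
  intro n
  induction n with
  | zero =>
    intro w hw h
    have : v.1 = w.1 := by have := h.1; omega
    rw [pre_eq h (pre_refl w) this]
    exact pre_refl _
  | succ n ih =>
    intro w hw h
    by_cases e : v.1 = w.1
    · rw [pre_eq h (pre_refl w) e]
      exact pre_refl _
    · obtain ⟨p, h1, hp⟩ := exists_parent v w h (lt_of_le_of_ne h.1 e)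
      exact pre_trans (ih p (by have := hp.1; omega) h1) ((hG.aut g _ _).1 hp).2

omit hG in
lemma mem_rist {v : Vertex m} {g : G} :
    g ∈ rist G v ↔ ∀ w, ¬ Vertex.IsPrefix v w → g • w = w := by
  simp [rist, Subgroup.mem_iInf, MulAction.mem_stabilizer_iff]

omit hG in
lemma rist_mono {v w : Vertex m} (h : Vertex.IsPrefix v w) : rist G w ≤ rist G v := by
  intro g hg
  rw [mem_rist] at *
  exact fun x hx => hg x fun h' => hx (pre_trans h h')

lemma rist_conj (g : G) {v : Vertex m} {r : G} (hr : r ∈ rist G v) :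
    g * r * g⁻¹ ∈ rist G (g • v) := by
  rw [mem_rist] at *
  intro w hw
  rw [mul_smul, mul_smul, hr, smul_inv_smul]
  intro h
  apply hw
  have := pre_smul hG g h
  rwa [smul_inv_smul] at this

/-- elements fixing `T_u` pointwise -/
def fixT (G : Type*) [Group G] [MulAction G (Vertex m)] (u : Vertex m) : Subgroup G :=
  ⨅ w ∈ {w : Vertex m | Vertex.IsPrefix u w}, MulAction.stabilizer G w

omit hG in
lemma mem_fixT {v : Vertex m} {g : G} :
    g ∈ fixT G v ↔ ∀ w, Vertex.IsPrefix v w → g • w = w := by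
  simp [fixT, Subgroup.mem_iInf, MulAction.mem_stabilizer_iff]

omit hG in
lemma rist_le_fixT {u v : Vertex m} (e : u.1 = v.1) (hne : u ≠ v) : rist G u ≤ fixT G v := by
  intro g hg
  rw [mem_rist] at hg
  rw [mem_fixT]
  exact fun w hw => hg w fun h => hne (pre_eq h hw e)

lemma eq_one_of {u : Vertex m} {g : G} (h : g ∈ rist G u) (h' : g ∈ fixT G u) : g = 1 := by
  rw [mem_rist] at h
  rw [mem_fixT] at h'
  apply hG.faithful
  intro v
  by_cases hv : Vertex.IsPrefix u v
  · exact h' v hv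
  · exact h v hv

lemma comm_of {u : Vertex m} {x y : G} (hx : x ∈ rist G u) (hy : y ∈ fixT G u) :
    Commute x y := by
  have hx' := (rist G u).inv_mem hx
  have hy' := (fixT G u).inv_mem hy
  rw [mem_rist] at hx hx'
  rw [mem_fixT] at hy hy'
  have key : x * y * x⁻¹ * y⁻¹ = 1 := by
    apply hG.faithful
    intro w
    simp only [mul_smul]
    by_cases hw : Vertex.IsPrefix u w
    · rw [hy' w hw]
      have : Vertex.IsPrefix u (x⁻¹ • w) := by
        by_contra h
        have h2 := hx _ h
        rw [smul_inv_smul] at h2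
        rw [← h2] at h
        exact h hw
      rw [hy _ this, smul_inv_smul]
    · have : ¬ Vertex.IsPrefix u (y⁻¹ • w) := by
        intro h
        have h2 := hy _ h
        rw [smul_inv_smul] at h2
        rw [← h2] at h
        exact hw h
      rw [hx' _ this, smul_inv_smul, hx w hw]
  have := mul_inv_eq_one.1 key
  exact mul_inv_eq_iff_eq_mul.1 this

lemma eq_one_of_moves {x : Vertex m} {r s : G} (hr : r • x ≠ x) (hs : s ∈ rist G x)
    (h : r * s = s * r) : s = 1 := by
  have h1 := rist_conj hG r hs
  rw [h, mul_inv_cancel_right] at h1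
  exact eq_one_of hG hs (rist_le_fixT (level_smul hG r x) hr h1)

lemma exists_moved {r : G} (hr : r ≠ 1) : ∃ x : Vertex m, r • x ≠ x := by
  by_contra! h
  exact hr (hG.faithful r h)

lemma rist_ne_bot (hm : ∀ n, 2 ≤ m n) (v : Vertex m) : ∃ r ∈ rist G v, r ≠ 1 := by
  by_contra! h
  have hb : ristLayer m G v.1 = ⊥ := by
    rw [eq_bot_iff]
    refine iSup₂_le fun w hw r hr => ?_
    obtain ⟨g, hg⟩ := hG.trans w v hw
    have := rist_conj hG g hr
    rw [hg] at this
    have := h _ this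
    rw [Subgroup.mem_bot]
    simpa using this
  have hfi := hG.ristFiniteIndex v.1
  rw [hb] at hfi
  have hfin : Finite G := by
    have := hfi.index_ne_zero
    rw [Subgroup.index_bot] at this
    exact Nat.finite_of_card_ne_zero this
  set N := Nat.card G with hN
  let x0 : Vertex m := ⟨N, fun i => ⟨0, by have := hm i; omega⟩⟩
  have hex : ∀ f : (∀ i : Fin N, Fin (m i)), ∃ g : G, g • x0 = (⟨N, f⟩ : Vertex m) :=
    fun f => hG.trans x0 _ rfl
  choose φ hφ using hex
  have hinj : Function.Injective φ := by
    intro f f' e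
    have h1 := (hφ f).symm.trans (e ▸ hφ f')
    exact eq_of_heq (Sigma.mk.inj h1).2
  have hle := Nat.card_le_card_of_injective φ hinj
  rw [Nat.card_pi] at hle
  have h2 : 2 ^ N ≤ ∏ i : Fin N, Nat.card (Fin (m i)) := by
    calc 2 ^ N = ∏ _i : Fin N, 2 := by simp
      _ ≤ _ := Finset.prod_le_prod' fun i _ => by simpa using hm i
  have h3 : N < 2 ^ N := Nat.lt_two_pow_self
  omega

lemma rist_sq (hm : ∀ n, 2 ≤ m n) (v : Vertex m) : ∃ r ∈ rist G v, r * r ≠ 1 := by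
  by_contra! h
  obtain ⟨r, hr, hr1⟩ := rist_ne_bot hG hm v
  obtain ⟨x, hx⟩ := exists_moved hG hr1
  have hvx : Vertex.IsPrefix v x := by
    by_contra hn
    exact hx (mem_rist.1 hr x hn)
  obtain ⟨s, hs, hs1⟩ := rist_ne_bot hG hm x
  have hs' := rist_mono hvx hs
  apply hs1
  apply eq_one_of_moves hG hx hs
  have e1 := eq_inv_of_mul_eq_one_left (h r hr)
  have e2 := eq_inv_of_mul_eq_one_left (h s hs')
  have e3 := eq_inv_of_mul_eq_one_left (h _ ((rist G v).mul_mem hr hs'))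
  rw [e3, mul_inv_rev, ← e1, ← e2]

lemma main (hm : ∀ n, 2 ≤ m n) (K : Subgroup G) (hab : ∀ a ∈ K, ∀ b ∈ K, a * b = b * a)
    (hn : ∀ g ∈ Subgroup.normalClosure (K : Set G), ∀ k ∈ K, g * k * g⁻¹ ∈ K) : K = ⊥ := by
  rw [Subgroup.eq_bot_iff_forall]
  intro k hk
  by_contra hk1
  obtain ⟨v, hv⟩ := exists_moved hG hk1
  have law : ∀ r ∈ rist G v, ∀ s ∈ rist G v, (r * r) * (s * s) = (s * s) * (r * r) := by
    -- decomposition of an element of K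
    have dec : ∀ r ∈ rist G v, ∃ e ∈ fixT G (k • v),
        (k * (r⁻¹ * r⁻¹) * k⁻¹) * e ∈ K := by
      intro r hr
      have hkn : k ∈ Subgroup.normalClosure (K : Set G) := Subgroup.subset_normalClosure hk
      have ha : r * (k * r⁻¹ * k⁻¹) ∈ Subgroup.normalClosure (K : Set G) := by
        have h1 := Subgroup.normalClosure_normal.conj_mem k hkn r
        have := Subgroup.mul_mem _ h1 (Subgroup.inv_mem _ hkn)
        convert this using 1
        group
      have hb := K.mul_mem (hn _ ha k hk) (K.inv_mem hk)
      have hrF : r ∈ fixT G (k • v) :=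
        rist_le_fixT (level_smul hG k v).symm (Ne.symm hv) hr
      have hp : k * r⁻¹ * k⁻¹ ∈ rist G (k • v) := rist_conj hG k (inv_mem hr)
      have hq : k * (k * r * k⁻¹) * k⁻¹ ∈ fixT G (k • v) := by
        refine rist_le_fixT (level_smul hG k (k • v)) ?_
          (rist_conj hG k (rist_conj hG k hr))
        intro e
        exact hv (MulAction.injective k e)
      refine ⟨r * (k * (k * r * k⁻¹) * k⁻¹), mul_mem hrF hq, ?_⟩
      convert hb using 1
      have hc : Commute (k * (r⁻¹ * r⁻¹) * k⁻¹) r := by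
        have := (comm_of hG hp hrF)
        have h2 := this.mul_left this
        have e : k * (r⁻¹ * r⁻¹) * k⁻¹ = k * r⁻¹ * k⁻¹ * (k * r⁻¹ * k⁻¹) := by group
        rw [e]
        exact h2
      have hd := (comm_of hG hp hq).eq
      rw [← mul_assoc, hc.eq]
      calc r * (k * (r⁻¹ * r⁻¹) * k⁻¹) * (k * (k * r * k⁻¹) * k⁻¹)
          = r * (k * r⁻¹ * k⁻¹) * ((k * r⁻¹ * k⁻¹) * (k * (k * r * k⁻¹) * k⁻¹)) := by group
        _ = r * (k * r⁻¹ * k⁻¹) * ((k * (k * r * k⁻¹) * k⁻¹) * (k * r⁻¹ * k⁻¹)) := by rw [hd]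
        _ = _ := by group
    intro r hr s hs
    obtain ⟨e, he, her⟩ := dec r hr
    obtain ⟨f, hf, hfs⟩ := dec s hs
    have hx : k * (r⁻¹ * r⁻¹) * k⁻¹ ∈ rist G (k • v) :=
      rist_conj hG k (mul_mem (inv_mem hr) (inv_mem hr))
    have hy : k * (s⁻¹ * s⁻¹) * k⁻¹ ∈ rist G (k • v) :=
      rist_conj hG k (mul_mem (inv_mem hs) (inv_mem hs))
    have hcomm := hab _ her _ hfs
    have hxy : (k * (r⁻¹ * r⁻¹) * k⁻¹) * (k * (s⁻¹ * s⁻¹) * k⁻¹)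
        = (k * (s⁻¹ * s⁻¹) * k⁻¹) * (k * (r⁻¹ * r⁻¹) * k⁻¹) := by
      generalize k * (r⁻¹ * r⁻¹) * k⁻¹ = x at *
      generalize k * (s⁻¹ * s⁻¹) * k⁻¹ = y at *
      have c1 := (comm_of hG hy he).eq
      have c2 := (comm_of hG hx hf).eq
      have h1 : (x * y) * (e * f) = (y * x) * (f * e) := by
        calc (x * y) * (e * f) = x * (y * e) * f := by group
          _ = (x * e) * (y * f) := by rw [c1]; group
          _ = (y * f) * (x * e) := hcomm
          _ = y * (f * x) * e := by group
          _ = (y * x) * (f * e) := by rw [← c2]; group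
      have h2 : (y * x)⁻¹ * (x * y) = (f * e) * (e * f)⁻¹ := by
        rw [eq_mul_inv_iff_mul_eq, mul_assoc, h1]
        group
      have h3 : (y * x)⁻¹ * (x * y) = 1 := by
        refine eq_one_of hG (u := k • v)
          (mul_mem (inv_mem (mul_mem hy hx)) (mul_mem hx hy)) ?_
        rw [h2]
        exact mul_mem (mul_mem hf he) (inv_mem (mul_mem he hf))
      exact (inv_mul_eq_one.1 h3).symm
    have h4 := congrArg (fun t => k⁻¹ * t⁻¹ * k) hxy
    have h5 : (s * s) * (r * r) = (r * r) * (s * s) := by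
      convert h4 using 1 <;> group <;> simp only [zpow_ofNat, pow_two, mul_assoc]
    exact h5.symm
  obtain ⟨r, hr, hr1⟩ := rist_sq hG hm v
  obtain ⟨x, hx⟩ := exists_moved hG hr1
  have hvx : Vertex.IsPrefix v x := by
    by_contra hn
    exact hx (mem_rist.1 (mul_mem hr hr) x hn)
  obtain ⟨s, hs, hs1⟩ := rist_sq hG hm x
  exact hs1 (eq_one_of_moves hG hx (mul_mem hs hs) (law r hr s (rist_mono hvx hs)))

end BranchAux

/-- **Lemma.** A branch group `G` has no non-trivial abelian subgroup `K` with
`K ⊴ K^G ⊴ G` (here `K^G` is the normal closure of `K` in `G`, which is automatically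
normal in `G`).  In particular `G` has no non-trivial abelian normal subgroup. -/
theorem no_abelian_subnormal_subgroup
    (m : ℕ → ℕ) (hm : ∀ n, 2 ≤ m n)
    (G : Type*) [Group G] [MulAction G (Vertex m)] (hG : IsBranchGroup m G) :
    (∀ K : Subgroup G, (∀ a ∈ K, ∀ b ∈ K, a * b = b * a) →
      (∀ g ∈ Subgroup.normalClosure (K : Set G), ∀ k ∈ K, g * k * g⁻¹ ∈ K) →
      K = ⊥) ∧
    (∀ K : Subgroup G, K.Normal → (∀ a ∈ K, ∀ b ∈ K, a * b = b * a) → K = ⊥) := by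
  exact ⟨fun K h1 h2 => BranchAux.main hG hm K h1 h2,
    fun K hK h1 => BranchAux.main hG hm K h1 fun g _ k hk => hK.conj_mem k hk g⟩
end

section
/- Let 𝔛 be a class of groups that is closed under isomorphism, quotients and extensions, let G be a group and let H be a normal subgroup of finite index in G. Suppose that for some integer c ≥ 0, every ascending chain (K_i)_{i∈ℕ} of normal subgroups of G (with K_{i-1} ≤ K_i for all i) has at most c indices i for which the factor K_i/K_{i-1} is not in 𝔛. Then every ascending chain of normal subgroups of H has at most c·2^{|G:H|−1} factors that are not in 𝔛. -/
/-!  Common definitions: rooted trees of type `(m n)`, tree automorphisms,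
rigid stabilizers, branch groups, and auxiliary notions. -/

universe u

section Helpers

variable {𝔛 : (Γ : Type u) → [inst : Group Γ] → Prop}

theorem cf_surj
    (hiso : ∀ (Γ₁ Γ₂ : Type u) [Group Γ₁] [Group Γ₂],
      Nonempty (Γ₁ ≃* Γ₂) → 𝔛 Γ₁ → 𝔛 Γ₂)
    (hquot : ∀ (Γ : Type u) [Group Γ] (N : Subgroup Γ) [N.Normal], 𝔛 Γ → 𝔛 (Γ ⧸ N))
    {Γ₁ Γ₂ : Type u} [Group Γ₁] [Group Γ₂] (f : Γ₁ →* Γ₂) (hf : Function.Surjective f)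
    (h : 𝔛 Γ₁) : 𝔛 Γ₂ :=
  hiso _ _ ⟨QuotientGroup.quotientKerEquivOfSurjective f hf⟩ (hquot Γ₁ f.ker h)

theorem cf_factor_surj
    (hiso : ∀ (Γ₁ Γ₂ : Type u) [Group Γ₁] [Group Γ₂],
      Nonempty (Γ₁ ≃* Γ₂) → 𝔛 Γ₁ → 𝔛 Γ₂)
    (hquot : ∀ (Γ : Type u) [Group Γ] (N : Subgroup Γ) [N.Normal], 𝔛 Γ → 𝔛 (Γ ⧸ N))
    {Γ₁ Γ₂ : Type u} [Group Γ₁] [Group Γ₂] {A B : Subgroup Γ₁} (f : ↥B →* Γ₂)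
    (hf : Function.Surjective f) (hk : ∀ x : ↥B, (x : Γ₁) ∈ A → f x = 1)
    (h : FactorIn 𝔛 A B) : 𝔛 Γ₂ := by
  obtain ⟨hn, h⟩ := h
  refine cf_surj hiso hquot (QuotientGroup.lift (A.subgroupOf B) f ?_) ?_ h
  · intro x hx
    exact hk x (Subgroup.mem_subgroupOf.1 hx)
  · exact QuotientGroup.lift_surjective_of_surjective _ _ hf _

theorem cf_quot
    (hiso : ∀ (Γ₁ Γ₂ : Type u) [Group Γ₁] [Group Γ₂],
      Nonempty (Γ₁ ≃* Γ₂) → 𝔛 Γ₁ → 𝔛 Γ₂)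
    (hquot : ∀ (Γ : Type u) [Group Γ] (N : Subgroup Γ) [N.Normal], 𝔛 Γ → 𝔛 (Γ ⧸ N))
    {Γ : Type u} [Group Γ] {A B C : Subgroup Γ} (hC : C.Normal) (hle : A ⊓ B ≤ C)
    (h : FactorIn 𝔛 A B) : FactorIn 𝔛 C B := by
  refine ⟨inferInstance, ?_⟩
  refine cf_factor_surj hiso hquot (QuotientGroup.mk' (C.subgroupOf B))
    (QuotientGroup.mk'_surjective _) ?_ h
  intro x hx
  simp only [QuotientGroup.mk'_apply, QuotientGroup.eq_one_iff]
  exact Subgroup.mem_subgroupOf.2 (hle ⟨hx, x.2⟩)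

theorem cf_sup
    (hiso : ∀ (Γ₁ Γ₂ : Type u) [Group Γ₁] [Group Γ₂],
      Nonempty (Γ₁ ≃* Γ₂) → 𝔛 Γ₁ → 𝔛 Γ₂)
    {Γ : Type u} [Group Γ] {N B : Subgroup Γ} (hN : N.Normal) :
    FactorIn 𝔛 N B ↔ FactorIn 𝔛 N (B ⊔ N) := by
  constructor
  · rintro ⟨_, h⟩
    exact ⟨inferInstance, hiso _ _ ⟨QuotientGroup.quotientInfEquivProdNormalQuotient B N⟩ h⟩
  · rintro ⟨_, h⟩
    exact ⟨inferInstance,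
      hiso _ _ ⟨(QuotientGroup.quotientInfEquivProdNormalQuotient B N).symm⟩ h⟩

theorem cf_ext
    (hiso : ∀ (Γ₁ Γ₂ : Type u) [Group Γ₁] [Group Γ₂],
      Nonempty (Γ₁ ≃* Γ₂) → 𝔛 Γ₁ → 𝔛 Γ₂)
    (hquot : ∀ (Γ : Type u) [Group Γ] (N : Subgroup Γ) [N.Normal], 𝔛 Γ → 𝔛 (Γ ⧸ N))
    (hext : ∀ (Γ : Type u) [Group Γ] (N : Subgroup Γ) [N.Normal],
      𝔛 ↥N → 𝔛 (Γ ⧸ N) → 𝔛 Γ)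
    {Γ : Type u} [Group Γ] {A B C : Subgroup Γ} (hA : A.Normal) (hB : B.Normal)
    (hBC : B ≤ C)
    (h1 : FactorIn 𝔛 A B) (h2 : FactorIn 𝔛 B C) : FactorIn 𝔛 A C := by
  refine ⟨inferInstance, ?_⟩
  have hnN : ((B.subgroupOf C).map (QuotientGroup.mk' (A.subgroupOf C))).Normal :=
    Subgroup.Normal.map inferInstance _ (QuotientGroup.mk'_surjective _)
  refine hext _ ((B.subgroupOf C).map (QuotientGroup.mk' (A.subgroupOf C))) ?_ ?_
  · refine cf_factor_surj hiso hquot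
      (((QuotientGroup.mk' (A.subgroupOf C)).comp (Subgroup.inclusion hBC)).codRestrict
        ((B.subgroupOf C).map (QuotientGroup.mk' (A.subgroupOf C))) ?_) ?_ ?_ h1
    · intro x
      exact Subgroup.mem_map_of_mem _ (Subgroup.mem_subgroupOf.2 x.2)
    · rintro ⟨_, ⟨x, hx, rfl⟩⟩
      exact ⟨⟨x, Subgroup.mem_subgroupOf.1 hx⟩, rfl⟩
    · intro x hx
      apply Subtype.ext
      change (QuotientGroup.mk' (A.subgroupOf C)) (Subgroup.inclusion hBC x) = 1
      simp only [QuotientGroup.mk'_apply, QuotientGroup.eq_one_iff]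
      exact Subgroup.mem_subgroupOf.2 hx
  · refine cf_factor_surj hiso hquot
      ((QuotientGroup.mk' ((B.subgroupOf C).map (QuotientGroup.mk' (A.subgroupOf C)))).comp
        (QuotientGroup.mk' (A.subgroupOf C))) ?_ ?_ h2
    · exact (QuotientGroup.mk'_surjective _).comp (QuotientGroup.mk'_surjective _)
    · intro x hx
      rw [MonoidHom.comp_apply, QuotientGroup.mk'_apply _, QuotientGroup.eq_one_iff]
      exact Subgroup.mem_map_of_mem _ (Subgroup.mem_subgroupOf.2 hx)

theorem cf_modular {Γ : Type u} [Group Γ] {MA LA Mb : Subgroup Γ} (hMb : Mb.Normal)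
    (hle : LA ≤ MA) : (LA ⊔ Mb) ⊓ MA ≤ LA ⊔ (MA ⊓ Mb) := by
  rintro x ⟨hx, hxM⟩
  obtain ⟨y, hy, z, hz, rfl⟩ := Subgroup.mem_sup_of_normal_right.1 hx
  refine Subgroup.mul_mem_sup hy ⟨?_, hz⟩
  exact (Subgroup.mul_mem_cancel_left _ (hle hy)).1 hxM

theorem cf_step
    (hiso : ∀ (Γ₁ Γ₂ : Type u) [Group Γ₁] [Group Γ₂],
      Nonempty (Γ₁ ≃* Γ₂) → 𝔛 Γ₁ → 𝔛 Γ₂)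
    (hquot : ∀ (Γ : Type u) [Group Γ] (N : Subgroup Γ) [N.Normal], 𝔛 Γ → 𝔛 (Γ ⧸ N))
    (hext : ∀ (Γ : Type u) [Group Γ] (N : Subgroup Γ) [N.Normal],
      𝔛 ↥N → 𝔛 (Γ ⧸ N) → 𝔛 Γ)
    {Γ : Type u} [Group Γ] {LA MA Lb Mb Wl Wm : Subgroup Γ}
    (hLA : LA.Normal) (hMb : Mb.Normal) (hWm : Wm.Normal)
    (h1 : LA ≤ MA) (h2 : Lb ≤ Mb) (h3 : Wl ≤ LA) (h4 : Wm ≤ MA) (h5 : MA ⊓ Mb ≤ Wm)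
    (F1 : FactorIn 𝔛 (LA ⊔ Lb) (MA ⊔ Mb)) (F2 : FactorIn 𝔛 Wl Wm) :
    FactorIn 𝔛 LA MA := by
  have a1 : FactorIn 𝔛 (LA ⊔ Mb) (MA ⊔ Mb) :=
    cf_quot hiso hquot inferInstance (inf_le_left.trans (sup_le_sup_left h2 _)) F1
  have e : MA ⊔ Mb = MA ⊔ (LA ⊔ Mb) := by
    rw [← sup_assoc, sup_eq_left.2 h1]
  rw [e, ← cf_sup hiso inferInstance] at a1
  have a2 : FactorIn 𝔛 (LA ⊔ Wm) MA :=
    cf_quot hiso hquot inferInstance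
      ((cf_modular hMb h1).trans (sup_le_sup_left h5 _)) a1
  have b1 : FactorIn 𝔛 LA Wm := cf_quot hiso hquot hLA (inf_le_left.trans h3) F2
  rw [cf_sup hiso hLA, sup_comm] at b1
  exact cf_ext hiso hquot hext hLA inferInstance (sup_le h1 h4) b1 a2

variable {G : Type u} [Group G] {H : Subgroup G} [H.Normal]

/-- Conjugate of a subgroup of `H` by `g`. -/
def cfConj (g : G) (N : Subgroup ↥H) : Subgroup ↥H :=
  N.map (MulAut.conjNormal g : MulAut ↥H).toMonoidHom

theorem cfConj_mono (g : G) {N M : Subgroup ↥H} (h : N ≤ M) : cfConj g N ≤ cfConj g M :=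
  Subgroup.map_mono h

theorem cfConj_normal (g : G) {N : Subgroup ↥H} (h : N.Normal) : (cfConj g N).Normal :=
  Subgroup.Normal.map h _ (MulAut.conjNormal g : MulAut ↥H).surjective

theorem cfConj_mul (g g' : G) (N : Subgroup ↥H) :
    cfConj g (cfConj g' N) = cfConj (g * g') N := by
  unfold cfConj
  rw [Subgroup.map_map]
  congr 1
  ext x
  simp [MulAut.conjNormal_apply, mul_assoc]

theorem cfConj_one (N : Subgroup ↥H) : cfConj (1 : G) N = N := by
  unfold cfConj
  convert Subgroup.map_id N
  ext x
  simp

theorem cfConj_mem {N : Subgroup ↥H} (hN : N.Normal) (h : G) (hh : h ∈ H) :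
    cfConj h N = N := by
  have key : ∀ h ∈ H, cfConj h N ≤ N := by
    rintro h hh _ ⟨x, hx, rfl⟩
    have := hN.conj_mem x hx ⟨h, hh⟩
    convert this using 1
    apply Subtype.ext
    simp [MulAut.conjNormal_apply]
  refine le_antisymm (key h hh) ?_
  have := cfConj_mono h (key h⁻¹ (H.inv_mem hh))
  rwa [cfConj_mul, mul_inv_cancel, cfConj_one] at this

/-- Join of the conjugates over a finite set of cosets. -/
noncomputable def cfJoin (A : Finset (G ⧸ H)) (N : Subgroup ↥H) : Subgroup ↥H :=
  ⨆ q ∈ A, cfConj q.out N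

theorem cfJoin_mono (A : Finset (G ⧸ H)) {N M : Subgroup ↥H} (h : N ≤ M) :
    cfJoin A N ≤ cfJoin A M :=
  iSup₂_mono fun q _ => cfConj_mono q.out h

theorem cfJoin_normal (A : Finset (G ⧸ H)) {N : Subgroup ↥H} (h : N.Normal) :
    (cfJoin A N).Normal := by
  unfold cfJoin
  have : ∀ q : G ⧸ H, (cfConj q.out N).Normal := fun q => cfConj_normal _ h
  have : ∀ q : G ⧸ H, (⨆ (_ : q ∈ A), cfConj q.out N).Normal := fun q =>
    Subgroup.iSup_normal _
  exact Subgroup.iSup_normal _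

theorem cfJoin_univ_conj [Fintype (G ⧸ H)] {N : Subgroup ↥H} (hN : N.Normal) (g : G) :
    cfConj g (cfJoin Finset.univ N) ≤ cfJoin Finset.univ N := by
  unfold cfJoin
  conv_lhs => unfold cfConj
  simp only [Subgroup.map_iSup, Finset.mem_univ, iSup_pos]
  refine iSup_le fun q => ?_
  change cfConj g (cfConj q.out N) ≤ _
  refine le_trans ?_ (le_iSup _ (g • q))
  rw [cfConj_mul]
  have hm : ((g • q).out)⁻¹ * (g * q.out) ∈ H := by
    rw [← QuotientGroup.eq, QuotientGroup.out_eq', ← smul_eq_mul, ← MulAction.Quotient.smul_mk,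
      QuotientGroup.out_eq']
  have e : g * q.out = (g • q).out * (((g • q).out)⁻¹ * (g * q.out)) := by group
  rw [e, ← cfConj_mul, cfConj_mem hN _ hm]

theorem cf_count [H.FiniteIndex] (c : ℕ)
    (hiso : ∀ (Γ₁ Γ₂ : Type u) [Group Γ₁] [Group Γ₂],
      Nonempty (Γ₁ ≃* Γ₂) → 𝔛 Γ₁ → 𝔛 Γ₂)
    (hquot : ∀ (Γ : Type u) [Group Γ] (N : Subgroup Γ) [N.Normal], 𝔛 Γ → 𝔛 (Γ ⧸ N))
    (hext : ∀ (Γ : Type u) [Group Γ] (N : Subgroup Γ) [N.Normal],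
      𝔛 ↥N → 𝔛 (Γ ⧸ N) → 𝔛 Γ)
    (hchain : ∀ K : ℕ → Subgroup G, (∀ i, (K i).Normal) → (∀ i, K i ≤ K (i + 1)) →
      ∀ s : Finset ℕ, (∀ i ∈ s, ¬ FactorIn 𝔛 (K i) (K (i + 1))) → s.card ≤ c) (k : ℕ) :
    ∀ A : Finset (G ⧸ H), A.card + k = H.index →
    ∀ K : ℕ → Subgroup ↥H, (∀ i, (K i).Normal) → (∀ i, K i ≤ K (i + 1)) →
      ∀ s : Finset ℕ, (∀ i ∈ s, ¬ FactorIn 𝔛 (cfJoin A (K i)) (cfJoin A (K (i + 1)))) →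
        s.card ≤ c * 2 ^ k := by
  classical
  have : Fintype (G ⧸ H) := Fintype.ofFinite _
  have hidx : H.index = Fintype.card (G ⧸ H) := by
    rw [Subgroup.index, Nat.card_eq_fintype_card]
  induction k with
  | zero =>
    intro A hA K hK hKm s hs
    have hAu : A = Finset.univ := by
      rw [← Finset.card_eq_iff_eq_univ]; omega
    subst hAu
    rw [pow_zero, mul_one]
    refine hchain (fun i => (cfJoin Finset.univ (K i)).map H.subtype) ?_ ?_ s ?_
    · intro i
      constructor
      rintro _ ⟨x, hx, rfl⟩ g
      exact ⟨MulAut.conjNormal g x,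
        cfJoin_univ_conj (hK i) g (Subgroup.mem_map_of_mem _ hx), by simp⟩
    · intro i
      exact Subgroup.map_mono (cfJoin_mono _ (hKm i))
    · intro i hi hF
      apply hs i hi
      have hn := cfJoin_normal (Finset.univ : Finset (G ⧸ H)) (hK i)
      refine ⟨inferInstance, ?_⟩
      let e := (Subgroup.equivMapOfInjective (cfJoin Finset.univ (K (i+1))) H.subtype
        H.subtype_injective)
      refine cf_factor_surj hiso hquot ((QuotientGroup.mk' _).comp e.symm.toMonoidHom) ?_ ?_ hF
      · exact (QuotientGroup.mk'_surjective _).comp e.symm.surjective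
      · intro x hx
        obtain ⟨y, rfl⟩ := e.surjective x
        rw [MonoidHom.comp_apply, QuotientGroup.mk'_apply, QuotientGroup.eq_one_iff]
        obtain ⟨w, hw, hwy⟩ := hx
        have : w = (y : ↥H) := H.subtype_injective hwy
        rw [Subgroup.mem_subgroupOf]
        subst this
        simpa using hw
  | succ k ih =>
    intro A hA K hK hKm s hs
    obtain ⟨b, hb⟩ : ∃ b, b ∉ A := by
      by_contra! hcon
      have : A = Finset.univ := Finset.eq_univ_iff_forall.2 hcon
      rw [← Finset.card_eq_iff_eq_univ] at this
      omega
    have hcard : (insert b A).card + k = H.index := by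
      rw [Finset.card_insert_of_notMem hb]; omega
    let Z : ℕ → Subgroup ↥H := fun i =>
      cfConj (b.out)⁻¹ (cfJoin A (K i) ⊓ cfConj b.out (K i))
    have hZb : ∀ i, cfConj b.out (Z i) = cfJoin A (K i) ⊓ cfConj b.out (K i) := by
      intro i
      simp only [Z, cfConj_mul, mul_inv_cancel, cfConj_one]
    have hZK : ∀ i, Z i ≤ K i := by
      intro i
      have := cfConj_mono (b.out)⁻¹
        (inf_le_right : cfJoin A (K i) ⊓ cfConj b.out (K i) ≤ _)
      rwa [cfConj_mul, inv_mul_cancel, cfConj_one] at this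
    have hZn : ∀ i, (Z i).Normal := by
      intro i
      have := cfJoin_normal A (hK i)
      have := cfConj_normal b.out (hK i)
      exact cfConj_normal _ inferInstance
    have hZm : ∀ i, Z i ≤ Z (i + 1) := fun i =>
      cfConj_mono _ (inf_le_inf (cfJoin_mono _ (hKm i)) (cfConj_mono _ (hKm i)))
    have hins : ∀ N : Subgroup ↥H, cfJoin (insert b A) N = cfJoin A N ⊔ cfConj b.out N := by
      intro N
      unfold cfJoin
      rw [Finset.iSup_insert, sup_comm]
    have hZle : ∀ i, cfJoin (insert b A) (Z i) ≤ cfJoin A (K i) := by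
      intro i
      rw [hins, hZb]
      exact sup_le (cfJoin_mono _ (hZK i)) inf_le_left
    let P : ℕ → Prop := fun i =>
      FactorIn 𝔛 (cfJoin (insert b A) (K i)) (cfJoin (insert b A) (K (i + 1)))
    have c1 := ih (insert b A) hcard K hK hKm (s.filter fun i => ¬ P i)
      (fun i hi => (Finset.mem_filter.1 hi).2)
    have c2 := ih (insert b A) hcard Z hZn hZm (s.filter fun i => P i) (by
      intro i hi hF
      obtain ⟨his, hP⟩ := Finset.mem_filter.1 hi
      apply hs i his
      simp only [P, hins (K _)] at hP
      refine cf_step hiso hquot hext (cfJoin_normal A (hK i)) (cfConj_normal _ (hK (i+1)))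
        (cfJoin_normal _ (hZn (i+1))) (cfJoin_mono _ (hKm i)) (cfConj_mono _ (hKm i))
        (hZle i) (hZle (i+1)) ?_ hP hF
      rw [hins, hZb]
      exact le_sup_right)
    have hsum : (s.filter fun i => P i).card + (s.filter fun i => ¬ P i).card = s.card := by
      convert Finset.card_filter_add_card_filter_not (s := s) P
    rw [pow_succ, ← mul_assoc]
    omega

end Helpers

/-- **Lemma.** Let `𝔛` be a class of groups closed under isomorphism, quotients and
extensions, and let `H ⊴ G` have finite index.  If every ascending chain of normal
subgroups of `G` has at most `c` factors not in `𝔛`, then every ascending chain of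
normal subgroups of `H` has at most `c·2^{|G:H|-1}` factors not in `𝔛`. -/
theorem chain_factors_bound_of_normal_finite_index
    (𝔛 : (Γ : Type u) → [inst : Group Γ] → Prop)
    (hiso : ∀ (Γ₁ Γ₂ : Type u) [Group Γ₁] [Group Γ₂],
      Nonempty (Γ₁ ≃* Γ₂) → 𝔛 Γ₁ → 𝔛 Γ₂)
    (hquot : ∀ (Γ : Type u) [Group Γ] (N : Subgroup Γ) [N.Normal], 𝔛 Γ → 𝔛 (Γ ⧸ N))
    (hext : ∀ (Γ : Type u) [Group Γ] (N : Subgroup Γ) [N.Normal],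
      𝔛 ↥N → 𝔛 (Γ ⧸ N) → 𝔛 Γ)
    (G : Type u) [Group G] (H : Subgroup G) [H.Normal] [H.FiniteIndex] (c : ℕ)
    (hchain : ∀ K : ℕ → Subgroup G, (∀ i, (K i).Normal) → (∀ i, K i ≤ K (i + 1)) →
      ∀ s : Finset ℕ, (∀ i ∈ s, ¬ FactorIn 𝔛 (K i) (K (i + 1))) → s.card ≤ c) :
    ∀ K : ℕ → Subgroup ↥H, (∀ i, (K i).Normal) → (∀ i, K i ≤ K (i + 1)) →
      ∀ s : Finset ℕ, (∀ i ∈ s, ¬ FactorIn 𝔛 (K i) (K (i + 1))) →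
        s.card ≤ c * 2 ^ (H.index - 1) := by
  intro K hK hKm s hs
  let b : G ⧸ H := ((1 : G) : G ⧸ H)
  have hj : ∀ N : Subgroup ↥H, cfJoin {b} (cfConj (b.out)⁻¹ N) = N := by
    intro N
    simp [cfJoin, cfConj_mul, cfConj_one]
  have hpos : H.index ≠ 0 := Subgroup.FiniteIndex.index_ne_zero
  refine cf_count c hiso hquot hext hchain (H.index - 1) {b} ?_
    (fun i => cfConj (b.out)⁻¹ (K i)) (fun i => cfConj_normal _ (hK i))
    (fun i => cfConj_mono _ (hKm i)) s ?_
  · rw [Finset.card_singleton]; omega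
  · intro i hi
    simp only [hj]
    exact hs i hi
end

section
/- Let 𝔛 be a class of groups closed under isomorphism, quotients and extensions, let H be a group, and let A_1, A_2, B_1, B_2 be normal subgroups of H with A_1 ≤ A_2 and B_1 ≤ B_2. If both quotients A_2B_2/A_1B_1 and (A_2 ∩ B_2)/(A_1 ∩ B_1) lie in 𝔛, then A_2/A_1 lies in 𝔛. -/
/-!  Common definitions: rooted trees of type `(m n)`, tree automorphisms,
rigid stabilizers, branch groups, and auxiliary notions. -/

universe u

theorem transfer_aux
    (𝔛 : (Γ : Type u) → [inst : Group Γ] → Prop)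
    (hiso : ∀ (Γ₁ Γ₂ : Type u) [Group Γ₁] [Group Γ₂],
      Nonempty (Γ₁ ≃* Γ₂) → 𝔛 Γ₁ → 𝔛 Γ₂)
    (hquot : ∀ (Γ : Type u) [Group Γ] (N : Subgroup Γ) [N.Normal], 𝔛 Γ → 𝔛 (Γ ⧸ N))
    (G X Y : Type u) [Group G] [Group X] [Group Y] (f : G →* X) (g : G →* Y)
    (hf : Function.Surjective f) (hg : Function.Surjective g)
    (hk : ∀ x, f x = 1 → g x = 1) (hX : 𝔛 X) : 𝔛 Y := by
  have hk' : f.ker ≤ g.ker := fun x hx => hk x hx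
  let h₁ : G ⧸ f.ker →* Y := QuotientGroup.lift f.ker g hk'
  have h₁s : Function.Surjective h₁ := fun y => by
    obtain ⟨x, rfl⟩ := hg y
    exact ⟨(x : G ⧸ f.ker), rfl⟩
  have e := QuotientGroup.quotientKerEquivOfSurjective f hf
  have e₂ := QuotientGroup.quotientKerEquivOfSurjective h₁ h₁s
  exact hiso _ _ ⟨e₂⟩ (hquot _ h₁.ker (hiso _ _ ⟨e.symm⟩ hX))

/-- **Lemma.** Let `𝔛` be a class of groups closed under isomorphism, quotients and
extensions, and let `A₁ ≤ A₂`, `B₁ ≤ B₂` be normal subgroups of `H`.  If both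
`A₂B₂/A₁B₁` and `(A₂ ∩ B₂)/(A₁ ∩ B₁)` lie in `𝔛`, then `A₂/A₁` lies in `𝔛`.
(For normal subgroups the product `AB` is the join `A ⊔ B`.) -/
theorem factor_in_of_join_and_inf
    (𝔛 : (Γ : Type u) → [inst : Group Γ] → Prop)
    (hiso : ∀ (Γ₁ Γ₂ : Type u) [Group Γ₁] [Group Γ₂],
      Nonempty (Γ₁ ≃* Γ₂) → 𝔛 Γ₁ → 𝔛 Γ₂)
    (hquot : ∀ (Γ : Type u) [Group Γ] (N : Subgroup Γ) [N.Normal], 𝔛 Γ → 𝔛 (Γ ⧸ N))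
    (hext : ∀ (Γ : Type u) [Group Γ] (N : Subgroup Γ) [N.Normal],
      𝔛 ↥N → 𝔛 (Γ ⧸ N) → 𝔛 Γ)
    (H : Type u) [Group H] (A₁ A₂ B₁ B₂ : Subgroup H)
    [A₁.Normal] [A₂.Normal] [B₁.Normal] [B₂.Normal]
    (hA : A₁ ≤ A₂) (hB : B₁ ≤ B₂)
    (hjoin : FactorIn 𝔛 (A₁ ⊔ B₁) (A₂ ⊔ B₂))
    (hinf : FactorIn 𝔛 (A₁ ⊓ B₁) (A₂ ⊓ B₂)) :
    FactorIn 𝔛 A₁ A₂ := by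
  obtain ⟨hn1, h1⟩ := hjoin
  obtain ⟨hn2, h2⟩ := hinf
  refine ⟨inferInstance, ?_⟩
  let π : ↥A₂ →* ↥A₂ ⧸ A₁.subgroupOf A₂ := QuotientGroup.mk' _
  have hπ : Function.Surjective π := QuotientGroup.mk'_surjective _
  have hπ1 : ∀ x, π x = 1 ↔ (x : H) ∈ A₁ := fun x => by
    simp [π, Subgroup.mem_subgroupOf]
  let N : Subgroup (↥A₂ ⧸ A₁.subgroupOf A₂) := (B₂.subgroupOf A₂).map π
  haveI hN : N.Normal := Subgroup.Normal.map inferInstance π hπ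
  show 𝔛 (↥A₂ ⧸ A₁.subgroupOf A₂)
  refine hext _ N ?_ ?_
  · -- N is a quotient of the intersection factor
    let g : ↥(A₂ ⊓ B₂) →* N :=
      (π.comp (Subgroup.inclusion inf_le_left)).codRestrict N
        (fun x => ⟨_, x.2.2, rfl⟩)
    refine transfer_aux 𝔛 hiso hquot _ _ _ (QuotientGroup.mk' _) g
      (QuotientGroup.mk'_surjective _) ?_ ?_ h2
    · rintro ⟨_, x, hx, rfl⟩
      exact ⟨⟨x, x.2, hx⟩, rfl⟩
    · intro x hx
      have hx' : (x : H) ∈ A₁ ⊓ B₁ := by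
        simpa [Subgroup.mem_subgroupOf] using hx
      apply Subtype.ext
      exact (hπ1 _).2 hx'.1
  · -- the quotient by N is a quotient of the join factor
    have h3 : 𝔛 (↥(A₂ ⊔ B₂) ⧸ (A₁ ⊔ B₂).subgroupOf (A₂ ⊔ B₂)) := by
      refine transfer_aux 𝔛 hiso hquot _ _ _ (QuotientGroup.mk' _) (QuotientGroup.mk' _)
        (QuotientGroup.mk'_surjective _) (QuotientGroup.mk'_surjective _) ?_ h1
      intro x hx
      have hx' : (x : H) ∈ A₁ ⊔ B₁ := by
        simpa [Subgroup.mem_subgroupOf] using hx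
      have : (x : H) ∈ A₁ ⊔ B₂ := sup_le_sup_left hB A₁ hx'
      simpa [Subgroup.mem_subgroupOf] using this
    refine transfer_aux 𝔛 hiso hquot _ _ _
      ((QuotientGroup.mk' ((A₁ ⊔ B₂).subgroupOf (A₂ ⊔ B₂))).comp
        (Subgroup.inclusion (le_sup_left : A₂ ≤ A₂ ⊔ B₂)))
      ((QuotientGroup.mk' N).comp π) ?_
      ((QuotientGroup.mk'_surjective _).comp hπ) ?_ h3
    · intro y
      obtain ⟨⟨x, hx⟩, rfl⟩ := QuotientGroup.mk'_surjective _ y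
      obtain ⟨a, ha, b, hb, rfl⟩ := Subgroup.mem_sup_of_normal_right.1 hx
      refine ⟨⟨a, ha⟩, ?_⟩
      refine QuotientGroup.eq.2 ?_
      have : b ∈ A₁ ⊔ B₂ := Subgroup.mem_sup_right hb
      simpa [Subgroup.mem_subgroupOf] using this
    · intro x hx
      have hx' : (x : H) ∈ A₁ ⊔ B₂ := by
        simpa [Subgroup.mem_subgroupOf] using hx
      obtain ⟨a, ha, b, hb, hab⟩ := Subgroup.mem_sup_of_normal_right.1 hx'
      have hbA : b ∈ A₂ := by
        have : b = a⁻¹ * x := by rw [← hab]; group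
        rw [this]; exact A₂.mul_mem (A₂.inv_mem (hA ha)) x.2
      refine (QuotientGroup.eq_one_iff _).2 ⟨⟨b, hbA⟩, hb, ?_⟩
      have hxe : x = ⟨a, hA ha⟩ * ⟨b, hbA⟩ := Subtype.ext hab.symm
      rw [hxe, map_mul, (hπ1 ⟨a, hA ha⟩).2 ha, one_mul]
end
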